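/- arXiv:2106.07108 — 6 statements merged into one kernel-verified Lean document; each statement's English description precedes it below -/
import Mathlib

section
/- Suppose C ∈ ℝ^{(m+1)×(m+1)} is symmetric positive definite, β > 0, v ∈ ℝ, and w ∈ ℝ^{1×m}. If there exists u ∈ ℝ^m such that β √((1,uᵀ) C (1,uᵀ)ᵀ) ≤ v + w u, then ψ C⁻¹ ψᵀ ≥ β², where ψ := [v w] ∈ ℝ^{1×(m+1)}. (Necessary condition for pointwise feasibility, Lemma 2 of the paper.) -/
open Matrix

/-- The vector `(1, uᵀ)ᵀ ∈ ℝ^{m+1}`, indexed by `Fin 1 ⊕ Fin m`. -/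
def onePad {m : ℕ} (u : Fin m → ℝ) : Fin 1 ⊕ Fin m → ℝ :=
  Sum.elim (fun _ => (1 : ℝ)) u

/-- The row vector `ψ = [v w] ∈ ℝ^{1×(m+1)}`, indexed by `Fin 1 ⊕ Fin m`. -/
def psiRow {m : ℕ} (v : ℝ) (w : Fin m → ℝ) : Fin 1 ⊕ Fin m → ℝ :=
  Sum.elim (fun _ => v) w

/-- The generalized Cauchy–Schwarz inequality for a positive definite matrix and its inverse. -/
theorem Matrix.PosDef.sq_dotProduct_le {n : Type*} [Fintype n] [DecidableEq n]
    {C : Matrix n n ℝ} (hC : C.PosDef) (x y : n → ℝ) :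
    (x ⬝ᵥ y) ^ 2 ≤ (x ⬝ᵥ (C *ᵥ x)) * (y ⬝ᵥ (C⁻¹ *ᵥ y)) := by
  rcases eq_or_ne x 0 with rfl | hx
  · simp
  have hpos : 0 < x ⬝ᵥ (C *ᵥ x) := by simpa using hC.dotProduct_mulVec_pos hx
  obtain ⟨z, rfl⟩ : ∃ z, y = C *ᵥ z :=
    ⟨C⁻¹ *ᵥ y, by
      rw [mulVec_mulVec, mul_nonsing_inv _ ((isUnit_iff_isUnit_det C).1 hC.isUnit), one_mulVec]⟩
  have hsymm : z ⬝ᵥ (C *ᵥ x) = x ⬝ᵥ (C *ᵥ z) := by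
    have hT : Cᵀ = C := by simpa using hC.isHermitian.eq
    rw [dotProduct_mulVec, ← mulVec_transpose, hT, dotProduct_comm]
  have hinv : (C *ᵥ z) ⬝ᵥ (C⁻¹ *ᵥ (C *ᵥ z)) = z ⬝ᵥ (C *ᵥ z) := by
    rw [mulVec_mulVec, nonsing_inv_mul _ ((isUnit_iff_isUnit_det C).1 hC.isUnit), one_mulVec,
      dotProduct_comm]
  rw [hinv]
  have hquad := hC.posSemidef.dotProduct_mulVec_nonneg
    ((x ⬝ᵥ (C *ᵥ x)) • z - (x ⬝ᵥ (C *ᵥ z)) • x)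
  simp only [star_trivial, mulVec_sub, mulVec_smul, sub_dotProduct, dotProduct_sub,
    smul_dotProduct, dotProduct_smul, smul_eq_mul, hsymm] at hquad
  refine sub_nonneg.1 (nonneg_of_mul_nonneg_right ?_ hpos)
  linarith

/-- Lemma 2 (necessary condition for pointwise feasibility): if the chance
constraint `β √((1,uᵀ) C (1,uᵀ)ᵀ) ≤ v + w u` is feasible for some `u`, then
`ψ C⁻¹ ψᵀ ≥ β²` where `ψ = [v w]`. -/
theorem necessary_condition_feasibility {m : ℕ} (hm : 0 < m)
    (C : Matrix (Fin 1 ⊕ Fin m) (Fin 1 ⊕ Fin m) ℝ) (hC : C.PosDef)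
    (β : ℝ) (hβ : 0 < β) (v : ℝ) (w : Fin m → ℝ)
    (hfeas : ∃ u : Fin m → ℝ,
      β * Real.sqrt (onePad u ⬝ᵥ (C *ᵥ onePad u)) ≤ v + w ⬝ᵥ u) :
    psiRow v w ⬝ᵥ (C⁻¹ *ᵥ psiRow v w) ≥ β ^ 2 := by
  obtain ⟨u, hu⟩ := hfeas
  have hne : onePad u ≠ 0 := fun h => by simpa [onePad] using congrFun h (Sum.inl 0)
  have hpos : 0 < onePad u ⬝ᵥ (C *ᵥ onePad u) := by simpa using hC.dotProduct_mulVec_pos hne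
  have hdot : onePad u ⬝ᵥ psiRow v w = v + w ⬝ᵥ u := by
    simp [onePad, psiRow, dotProduct, mul_comm]
  have hsq := pow_le_pow_left₀ (by positivity) hu 2
  rw [mul_pow, Real.sq_sqrt hpos.le, ← hdot] at hsq
  have hcs := hC.sq_dotProduct_le (onePad u) (psiRow v w)
  refine le_of_mul_le_mul_left ?_ hpos
  linarith
end

section
/- Suppose QᵀQ is positive definite and the smallest eigenvalue of the symmetric matrix F = QᵀQ − wᵀw is negative (equivalently, there exists e ∈ ℝ^m with eᵀ F e < 0). Then there exists u ∈ ℝ^m satisfying the second-order cone constraint ‖Q u + r‖₂ ≤ w u + v. (Sufficient condition for pointwise feasibility, Lemma 3 of the paper.) -/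
open Matrix

/-- The Euclidean norm of a vector in `ℝ^{m+1}`. -/
noncomputable def eucNorm {n : ℕ} (x : Fin n → ℝ) : ℝ :=
  Real.sqrt (x ⬝ᵥ x)

theorem eucNorm_eq_norm_toLp {n : ℕ} (x : Fin n → ℝ) : eucNorm x = ‖WithLp.toLp 2 x‖ := by
  simp [eucNorm, EuclideanSpace.norm_eq, dotProduct, sq]

theorem eucNorm_add_le {n : ℕ} (x y : Fin n → ℝ) :
    eucNorm (x + y) ≤ eucNorm x + eucNorm y := by
  simpa only [eucNorm_eq_norm_toLp, WithLp.toLp_add] using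
    norm_add_le (WithLp.toLp 2 x) (WithLp.toLp 2 y)

theorem eucNorm_smul {n : ℕ} (c : ℝ) (x : Fin n → ℝ) :
    eucNorm (c • x) = |c| * eucNorm x := by
  simp only [eucNorm_eq_norm_toLp, WithLp.toLp_smul, norm_smul, Real.norm_eq_abs]

theorem dotProduct_gram_sub_vecMulVec_mulVec {k n : ℕ} (Q : Matrix (Fin k) (Fin n) ℝ)
    (w e : Fin n → ℝ) :
    e ⬝ᵥ ((Qᵀ * Q - Matrix.vecMulVec w w) *ᵥ e) =
      (Q *ᵥ e) ⬝ᵥ (Q *ᵥ e) - (w ⬝ᵥ e) ^ 2 := by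
  rw [Matrix.sub_mulVec, dotProduct_sub, ← Matrix.mulVec_mulVec, Matrix.dotProduct_mulVec,
    Matrix.vecMul_transpose, Matrix.vecMulVec_mulVec]
  simp [dotProduct_smul, dotProduct_comm e w, sq]

/-- A direction along which the affine part grows faster than the norm reaches the cone. -/
theorem exists_eucNorm_le_of_eucNorm_mulVec_lt {k n : ℕ} (Q : Matrix (Fin k) (Fin n) ℝ)
    (r : Fin k → ℝ) (w : Fin n → ℝ) (v : ℝ) {e : Fin n → ℝ}
    (he : eucNorm (Q *ᵥ e) < w ⬝ᵥ e) :
    ∃ u : Fin n → ℝ, eucNorm (Q *ᵥ u + r) ≤ w ⬝ᵥ u + v := by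
  have hgap : 0 < w ⬝ᵥ e - eucNorm (Q *ᵥ e) := sub_pos.2 he
  have hr : 0 ≤ eucNorm r := Real.sqrt_nonneg _
  obtain ⟨t, ht, htgap⟩ : ∃ t : ℝ, 0 ≤ t ∧
      t * (w ⬝ᵥ e - eucNorm (Q *ᵥ e)) = eucNorm r + |v| :=
    ⟨(eucNorm r + |v|) / (w ⬝ᵥ e - eucNorm (Q *ᵥ e)), by positivity,
      div_mul_cancel₀ _ hgap.ne'⟩
  refine ⟨t • e, ?_⟩
  have hadd := eucNorm_add_le (t • (Q *ᵥ e)) r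
  rw [eucNorm_smul, abs_of_nonneg ht] at hadd
  rw [Matrix.mulVec_smul, dotProduct_smul, smul_eq_mul]
  linarith [neg_abs_le v]

/-- Lemma 3 (sufficient condition for pointwise feasibility): if `QᵀQ` is
positive definite and the smallest eigenvalue of `F = QᵀQ − wᵀw` is negative
(equivalently, `eᵀ F e < 0` for some `e`), then the SOC constraint
`‖Q u + r‖₂ ≤ w u + v` is feasible. -/
theorem sufficient_condition_feasibility {m : ℕ} (hm : 0 < m)
    (Q : Matrix (Fin (m + 1)) (Fin m) ℝ) (r : Fin (m + 1) → ℝ)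
    (w : Fin m → ℝ) (v : ℝ)
    (hQ : (Qᵀ * Q).PosDef)
    (hneg : ∃ e : Fin m → ℝ,
      e ⬝ᵥ ((Qᵀ * Q - Matrix.vecMulVec w w) *ᵥ e) < 0) :
    ∃ u : Fin m → ℝ, eucNorm (Q *ᵥ u + r) ≤ w ⬝ᵥ u + v := by
  obtain ⟨e, he⟩ := hneg
  rw [dotProduct_gram_sub_vecMulVec_mulVec, sub_neg] at he
  have hlt : eucNorm (Q *ᵥ e) < |w ⬝ᵥ e| := by
    rw [← Real.sqrt_sq_eq_abs]
    exact Real.sqrt_lt_sqrt (Finset.sum_nonneg fun i _ => mul_self_nonneg _) he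
  rcases abs_cases (w ⬝ᵥ e) with ⟨h, -⟩ | ⟨h, -⟩
  · exact exists_eucNorm_le_of_eucNorm_mulVec_lt Q r w v (h ▸ hlt)
  · refine exists_eucNorm_le_of_eucNorm_mulVec_lt Q r w v (e := -e) ?_
    rw [Matrix.mulVec_neg, dotProduct_neg, ← h, ← neg_one_smul ℝ, eucNorm_smul]
    simpa using hlt
end

section
/- Suppose the square matrix [r Q] ∈ ℝ^{(m+1)×(m+1)} is invertible and F = QᵀQ − wᵀw is positive definite. Then there exists u ∈ ℝ^m satisfying ‖Q u + r‖₂ ≤ w u + v if and only if H is not positive definite and v − w F⁻¹ (Qᵀr − wᵀv) ≥ 0. (Case 2 of Theorem 2 of the paper.) -/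
open Matrix

/-- The symmetric matrix
`H = [[rᵀr − v², rᵀQ − v w], [Qᵀr − wᵀv, QᵀQ − wᵀw]]`. -/
noncomputable def socMatH {m : ℕ} (Q : Matrix (Fin (m + 1)) (Fin m) ℝ)
    (r : Fin (m + 1) → ℝ) (w : Fin m → ℝ) (v : ℝ) :
    Matrix (Fin 1 ⊕ Fin m) (Fin 1 ⊕ Fin m) ℝ :=
  Matrix.fromBlocks
    (Matrix.of fun _ _ => r ⬝ᵥ r - v ^ 2)
    (Matrix.of fun _ j => (Qᵀ *ᵥ r) j - v * w j)
    (Matrix.of fun i _ => (Qᵀ *ᵥ r) i - v * w i)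
    (Qᵀ * Q - Matrix.vecMulVec w w)

/-- The quadratic function `‖Q d + a p‖² − (w d + a t)²` splits off its cross term at a critical
point, i.e. when `Qᵀ p = t w`. -/
lemma lorentz_form_of_critical {m n : ℕ} (Q : Matrix (Fin n) (Fin m) ℝ) (w : Fin m → ℝ)
    (p : Fin n → ℝ) (t : ℝ) (hcrit : Qᵀ *ᵥ p = t • w) (a : ℝ) (d : Fin m → ℝ) :
    (Q *ᵥ d + a • p) ⬝ᵥ (Q *ᵥ d + a • p) - (w ⬝ᵥ d + a * t) ^ 2 =
      d ⬝ᵥ ((Qᵀ * Q - vecMulVec w w) *ᵥ d) + a ^ 2 * (p ⬝ᵥ p - t ^ 2) := by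
  have hcross : p ⬝ᵥ (Q *ᵥ d) = t * (w ⬝ᵥ d) := by
    rw [dotProduct_mulVec, ← mulVec_transpose, hcrit, smul_dotProduct, smul_eq_mul]
  have hquad : d ⬝ᵥ ((Qᵀ * Q - vecMulVec w w) *ᵥ d) =
      (Q *ᵥ d) ⬝ᵥ (Q *ᵥ d) - (w ⬝ᵥ d) ^ 2 := by
    rw [sub_mulVec, dotProduct_sub, ← mulVec_mulVec, dotProduct_mulVec, vecMul_transpose,
      vecMulVec_mulVec]
    simp [dotProduct_comm d w, sq]
  rw [hquad]
  simp only [add_dotProduct, dotProduct_add, smul_dotProduct, dotProduct_smul, smul_eq_mul,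
    dotProduct_comm (Q *ᵥ d) p, hcross]
  ring

/-- The quadratic form of `socMatH` is the homogenized cone defect. -/
lemma dotProduct_socMatH_mulVec {m : ℕ} (Q : Matrix (Fin (m + 1)) (Fin m) ℝ)
    (r : Fin (m + 1) → ℝ) (w : Fin m → ℝ) (v : ℝ) (a : ℝ) (y : Fin m → ℝ) :
    Sum.elim (fun _ => a) y ⬝ᵥ (socMatH Q r w v *ᵥ Sum.elim (fun _ => a) y) =
      (Q *ᵥ y + a • r) ⬝ᵥ (Q *ᵥ y + a • r) - (w ⬝ᵥ y + a * v) ^ 2 := by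
  have hquad : y ⬝ᵥ ((Qᵀ * Q - vecMulVec w w) *ᵥ y) =
      (Q *ᵥ y) ⬝ᵥ (Q *ᵥ y) - (w ⬝ᵥ y) ^ 2 := by
    simpa using (lorentz_form_of_critical Q w 0 0 (by simp) 0 y).symm
  have hrow : (of fun (_ : Fin 1) j => (Qᵀ *ᵥ r) j - v * w j) *ᵥ y =
      fun _ => r ⬝ᵥ (Q *ᵥ y) - v * (w ⬝ᵥ y) := by
    funext i
    change (Qᵀ *ᵥ r - v • w) ⬝ᵥ y = _
    rw [sub_dotProduct, smul_dotProduct, mulVec_transpose, ← dotProduct_mulVec, smul_eq_mul]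
  have hcol : (of fun i (_ : Fin 1) => (Qᵀ *ᵥ r) i - v * w i) *ᵥ (fun _ => a) =
      a • (Qᵀ *ᵥ r - v • w) := by
    funext i
    simp [mulVec, dotProduct, mul_comm]
  have hcorner : (of fun (_ _ : Fin 1) => r ⬝ᵥ r - v ^ 2) *ᵥ (fun _ => a) =
      fun _ => (r ⬝ᵥ r - v ^ 2) * a := by
    funext i
    simp [mulVec, dotProduct]
  have hcross : y ⬝ᵥ (Qᵀ *ᵥ r) = r ⬝ᵥ (Q *ᵥ y) := by
    rw [dotProduct_comm, mulVec_transpose, ← dotProduct_mulVec]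
  rw [socMatH, fromBlocks_mulVec]
  simp only [Sum.elim_comp_inl, Sum.elim_comp_inr, sumElim_dotProduct_sumElim, hrow, hcol,
    hcorner, dotProduct_add, hquad, dotProduct_smul, dotProduct_sub, hcross, add_dotProduct,
    smul_dotProduct, smul_eq_mul, dotProduct_comm y w, dotProduct_comm (Q *ᵥ y) r]
  simp [dotProduct]
  ring

lemma isHermitian_socMatH {m : ℕ} (Q : Matrix (Fin (m + 1)) (Fin m) ℝ)
    (r : Fin (m + 1) → ℝ) (w : Fin m → ℝ) (v : ℝ)
    (hF : (Qᵀ * Q - vecMulVec w w).IsHermitian) : (socMatH Q r w v).IsHermitian :=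
  IsHermitian.fromBlocks (by ext; rfl) (by ext; rfl) hF

lemma mulVec_add_ne_zero_of_isUnit_cons {m : ℕ} {Q : Matrix (Fin (m + 1)) (Fin m) ℝ}
    {r : Fin (m + 1) → ℝ}
    (hrQ : IsUnit (of (fun i => Fin.cons (r i) (Q i)) :
      Matrix (Fin (m + 1)) (Fin (m + 1)) ℝ)) (u : Fin m → ℝ) : Q *ᵥ u + r ≠ 0 := by
  intro h
  have hker := mulVec_injective_of_isUnit hrQ (a₁ := Fin.cons 1 u) (a₂ := 0) (by
    rw [mulVec_zero, ← h]
    funext i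
    simp [mulVec, dotProduct, Fin.sum_univ_succ, add_comm])
  simpa using congrFun hker 0

lemma eucNorm_le_iff {n : ℕ} (x : Fin n → ℝ) (s : ℝ) :
    eucNorm x ≤ s ↔ 0 ≤ s ∧ x ⬝ᵥ x - s ^ 2 ≤ 0 := by
  rw [eucNorm, Real.sqrt_le_iff, sub_nonpos]

/-- Case 2 of Theorem 2: if `[r Q]` is invertible and `F = QᵀQ − wᵀw` is
positive definite, then the SOC constraint `‖Q u + r‖₂ ≤ w u + v` is feasible
iff `H` is not positive definite and `v − w F⁻¹ (Qᵀr − wᵀv) ≥ 0`. -/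
theorem case2_feasibility {m : ℕ} (hm : 0 < m)
    (Q : Matrix (Fin (m + 1)) (Fin m) ℝ) (r : Fin (m + 1) → ℝ)
    (w : Fin m → ℝ) (v : ℝ)
    (hrQ : IsUnit
      (Matrix.of (fun i => Fin.cons (r i) (Q i)) :
        Matrix (Fin (m + 1)) (Fin (m + 1)) ℝ))
    (hF : (Qᵀ * Q - Matrix.vecMulVec w w).PosDef) :
    (∃ u : Fin m → ℝ, eucNorm (Q *ᵥ u + r) ≤ w ⬝ᵥ u + v) ↔
      (¬ (socMatH Q r w v).PosDef ∧
        v - w ⬝ᵥ ((Qᵀ * Q - Matrix.vecMulVec w w)⁻¹ *ᵥ (Qᵀ *ᵥ r - v • w))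
          ≥ 0) := by
  set F := Qᵀ * Q - Matrix.vecMulVec w w with hFdef
  obtain ⟨u₀, hu₀⟩ : ∃ u₀, u₀ = -(F⁻¹ *ᵥ (Qᵀ *ᵥ r - v • w)) := ⟨_, rfl⟩
  obtain ⟨p, hp⟩ : ∃ p, p = Q *ᵥ u₀ + r := ⟨_, rfl⟩
  obtain ⟨t, ht⟩ : ∃ t, t = w ⬝ᵥ u₀ + v := ⟨_, rfl⟩
  have hFu₀ : F *ᵥ u₀ = -(Qᵀ *ᵥ r - v • w) := by
    rw [hu₀, mulVec_neg, mulVec_mulVec, mul_nonsing_inv _ hF.det_pos.ne'.isUnit, one_mulVec]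
  have hcrit : Qᵀ *ᵥ p = t • w := by
    rw [hFdef, sub_mulVec, ← mulVec_mulVec, vecMulVec_mulVec] at hFu₀
    rw [hp, ht, mulVec_add]
    funext i
    have hi := congrFun hFu₀ i
    simp at hi ⊢
    linarith
  have htv : v - w ⬝ᵥ (F⁻¹ *ᵥ (Qᵀ *ᵥ r - v • w)) = t := by
    rw [ht, hu₀, dotProduct_neg]
    ring
  have hform (a : ℝ) (d : Fin m → ℝ) :
      (Q *ᵥ (d + a • u₀) + a • r) ⬝ᵥ (Q *ᵥ (d + a • u₀) + a • r)
          - (w ⬝ᵥ (d + a • u₀) + a * v) ^ 2 =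
        d ⬝ᵥ (F *ᵥ d) + a ^ 2 * (p ⬝ᵥ p - t ^ 2) := by
    rw [hFdef, ← lorentz_form_of_critical Q w p t hcrit a d]
    have hQ : Q *ᵥ (d + a • u₀) + a • r = Q *ᵥ d + a • p := by
      rw [hp, mulVec_add, mulVec_smul, smul_add, add_assoc]
    have hw : w ⬝ᵥ (d + a • u₀) + a * v = w ⬝ᵥ d + a * t := by
      rw [ht, dotProduct_add, dotProduct_smul, smul_eq_mul]
      ring
    rw [hQ, hw]
  have hFpos {d : Fin m → ℝ} (hd : d ≠ 0) : 0 < d ⬝ᵥ (F *ᵥ d) := by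
    simpa using hF.dotProduct_mulVec_pos hd
  have hFnonneg (d : Fin m → ℝ) : 0 ≤ d ⬝ᵥ (F *ᵥ d) := by
    simpa using hF.posSemidef.dotProduct_mulVec_nonneg d
  rw [htv]
  simp only [eucNorm_le_iff]
  constructor
  · rintro ⟨u, hα, hu⟩
    refine ⟨fun hH => ?_, ?_⟩
    · have hne : Sum.elim (fun _ : Fin 1 => (1 : ℝ)) u ≠ 0 := fun h => by
        simpa using congrFun h (Sum.inl 0)
      have hpos := hH.dotProduct_mulVec_pos hne
      rw [star_trivial, dotProduct_socMatH_mulVec, one_smul, one_mul] at hpos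
      exact hpos.not_ge hu
    · by_contra! hneg
      -- The cone constraint holds up to sign on the segment from `u₀` to `u`, so `Q z + r`
      -- vanishes at the point `z` of that segment where `w z + v = 0`.
      have hgap : 0 < (w ⬝ᵥ u + v) - t := by linarith
      obtain ⟨c, hc⟩ : ∃ c, c = -t / ((w ⬝ᵥ u + v) - t) := ⟨_, rfl⟩
      have hc0 : 0 ≤ c := hc ▸ div_nonneg (by linarith) hgap.le
      have hc1 : c ≤ 1 := hc ▸ (div_le_one hgap).2 (by linarith)
      have hcmul : c * ((w ⬝ᵥ u + v) - t) = -t := hc ▸ div_mul_cancel₀ _ hgap.ne'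
      have hfu := hform 1 (u - u₀)
      have hfz := hform 1 (c • (u - u₀))
      simp only [one_smul, one_mul, one_pow, sub_add_cancel] at hfu hfz
      have hwz : w ⬝ᵥ (c • (u - u₀) + u₀) + v = 0 := by
        rw [dotProduct_add, dotProduct_smul, dotProduct_sub, smul_eq_mul]
        linear_combination hcmul + (c - 1) * ht
      rw [hwz, mulVec_smul, smul_dotProduct, dotProduct_smul, smul_eq_mul, smul_eq_mul] at hfz
      have hcc : c * (c * ((u - u₀) ⬝ᵥ (F *ᵥ (u - u₀)))) ≤ (u - u₀) ⬝ᵥ (F *ᵥ (u - u₀)) := by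
        rw [← mul_assoc]
        exact mul_le_of_le_one_left (hFnonneg _) (mul_le_one₀ hc1 hc0 hc1)
      refine mulVec_add_ne_zero_of_isUnit_cons hrQ (c • (u - u₀) + u₀)
        (dotProduct_self_eq_zero.1 (le_antisymm (by linarith) ?_))
      exact Finset.sum_nonneg fun i _ => mul_self_nonneg _
  · rintro ⟨hH, htnonneg⟩
    refine ⟨u₀, ht ▸ htnonneg, ?_⟩
    rw [← hp, ← ht]
    by_contra! hs
    refine hH (PosDef.of_dotProduct_mulVec_pos
      (isHermitian_socMatH Q r w v hF.isHermitian) fun x hx => ?_)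
    obtain ⟨a, d, rfl⟩ : ∃ (a : ℝ) (d : Fin m → ℝ),
        x = Sum.elim (fun _ => a) (d + a • u₀) := by
      refine ⟨x (Sum.inl 0), x ∘ Sum.inr - x (Sum.inl 0) • u₀, ?_⟩
      rw [sub_add_cancel]
      ext (i | i)
      · rw [Subsingleton.elim i 0, Sum.elim_inl]
      · rfl
    rw [star_trivial, dotProduct_socMatH_mulVec, hform]
    rcases eq_or_ne a 0 with rfl | ha
    · have hd : d ≠ 0 := by
        rintro rfl
        apply hx
        ext (i | i) <;> simp
      simpa using hFpos hd
    · exact add_pos_of_nonneg_of_pos (hFnonneg d) (by positivity)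
end

section
/- Suppose QᵀQ is positive definite, F = QᵀQ − wᵀw is positive semidefinite and singular (its smallest eigenvalue is 0), and p := v − w (QᵀQ)⁻¹ Qᵀ r > 0. Then there exists u ∈ ℝ^m satisfying the second-order cone constraint ‖Q u + r‖₂ ≤ w u + v; in fact, writing u₀ = −(QᵀQ)⁻¹Qᵀr and letting e be a unit vector with F e = 0, one has w e ≠ 0 and u = u₀ + α · sgn(w e) · e satisfies the constraint for all sufficiently large α > 0. (Sufficiency direction of Case 3 of Theorem 2 of the paper.) -/
open Matrix

/-- Along a direction `e` with `‖Q e‖² = (w e)²` and from a point `u₀` whose residual `Q u₀ + r` is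
orthogonal to the range of `Q`, the constraint holds as soon as the step is long enough. -/
theorem eucNorm_add_smul_sign_le {k n : ℕ} (Q : Matrix (Fin k) (Fin n) ℝ) (r : Fin k → ℝ)
    (w u₀ e : Fin n → ℝ) (v α : ℝ)
    (hres : Qᵀ *ᵥ (Q *ᵥ u₀ + r) = 0)
    (he : (Q *ᵥ e) ⬝ᵥ (Q *ᵥ e) = (w ⬝ᵥ e) ^ 2)
    (hwe : w ⬝ᵥ e ≠ 0) (hp : 0 ≤ w ⬝ᵥ u₀ + v) (hα₀ : 0 ≤ α)
    (hα : (Q *ᵥ u₀ + r) ⬝ᵥ (Q *ᵥ u₀ + r) ≤ 2 * (w ⬝ᵥ u₀ + v) * (α * |w ⬝ᵥ e|)) :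
    eucNorm (Q *ᵥ (u₀ + (α * Real.sign (w ⬝ᵥ e)) • e) + r) ≤
      w ⬝ᵥ (u₀ + (α * Real.sign (w ⬝ᵥ e)) • e) + v := by
  have hsign : Real.sign (w ⬝ᵥ e) * (w ⬝ᵥ e) = |w ⬝ᵥ e| := by
    rcases hwe.lt_or_gt with h | h
    · rw [Real.sign_of_neg h, abs_of_neg h]; ring
    · rw [Real.sign_of_pos h, abs_of_pos h]; ring
  have hrhs : w ⬝ᵥ (u₀ + (α * Real.sign (w ⬝ᵥ e)) • e) + v =
      (w ⬝ᵥ u₀ + v) + α * |w ⬝ᵥ e| := by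
    rw [dotProduct_add, dotProduct_smul, smul_eq_mul, mul_assoc, hsign]; ring
  have horth : (Q *ᵥ u₀ + r) ⬝ᵥ (Q *ᵥ e) = 0 := by
    rw [dotProduct_mulVec, ← mulVec_transpose, hres, zero_dotProduct]
  have hsplit : Q *ᵥ (u₀ + (α * Real.sign (w ⬝ᵥ e)) • e) + r =
      (Q *ᵥ u₀ + r) + (α * Real.sign (w ⬝ᵥ e)) • (Q *ᵥ e) := by
    rw [mulVec_add, mulVec_smul]; abel
  have hsq : (α * Real.sign (w ⬝ᵥ e)) * ((α * Real.sign (w ⬝ᵥ e)) * (w ⬝ᵥ e) ^ 2) =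
      (α * |w ⬝ᵥ e|) ^ 2 := by
    rw [← hsign]; ring
  rw [hrhs, eucNorm, hsplit]
  refine Real.sqrt_le_iff.mpr ⟨by positivity, ?_⟩
  generalize Q *ᵥ u₀ + r = y at *
  rw [add_dotProduct, dotProduct_add, dotProduct_add, smul_dotProduct, smul_dotProduct,
    dotProduct_smul, dotProduct_smul, dotProduct_comm (Q *ᵥ e) y, horth, he]
  simp only [smul_eq_mul, hsq, mul_zero]
  nlinarith [sq_nonneg (w ⬝ᵥ u₀ + v)]

/-- Sufficiency direction of Case 3 of Theorem 2: suppose `QᵀQ` is positive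
definite, `F = QᵀQ − wᵀw` is positive semidefinite and singular (so there is
a unit vector `e` with `F e = 0`), and `p = v − w (QᵀQ)⁻¹ Qᵀ r > 0`. Then the
SOC constraint `‖Q u + r‖₂ ≤ w u + v` is feasible; in fact, for any unit
vector `e` with `F e = 0` one has `w e ≠ 0` and, writing
`u₀ = −(QᵀQ)⁻¹ Qᵀ r`, the input `u = u₀ + α · sgn(w e) · e` satisfies the
constraint for all sufficiently large `α > 0`. -/
theorem case3_sufficiency {m : ℕ} (hm : 0 < m)
    (Q : Matrix (Fin (m + 1)) (Fin m) ℝ) (r : Fin (m + 1) → ℝ)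
    (w : Fin m → ℝ) (v : ℝ)
    (F : Matrix (Fin m) (Fin m) ℝ) (hFdef : F = Qᵀ * Q - Matrix.vecMulVec w w)
    (hQ : (Qᵀ * Q).PosDef)
    (hFpsd : F.PosSemidef)
    (hsing : ∃ e : Fin m → ℝ, e ⬝ᵥ e = 1 ∧ F *ᵥ e = 0)
    (u₀ : Fin m → ℝ) (hu₀ : u₀ = -((Qᵀ * Q)⁻¹ *ᵥ (Qᵀ *ᵥ r)))
    (hp : 0 < v - w ⬝ᵥ ((Qᵀ * Q)⁻¹ *ᵥ (Qᵀ *ᵥ r))) :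
    (∃ u : Fin m → ℝ, eucNorm (Q *ᵥ u + r) ≤ w ⬝ᵥ u + v) ∧
    ∀ e : Fin m → ℝ, e ⬝ᵥ e = 1 → F *ᵥ e = 0 →
      w ⬝ᵥ e ≠ 0 ∧
      ∃ α₀ : ℝ, 0 < α₀ ∧ ∀ α : ℝ, α₀ ≤ α →
        eucNorm (Q *ᵥ (u₀ + (α * Real.sign (w ⬝ᵥ e)) • e) + r) ≤
          w ⬝ᵥ (u₀ + (α * Real.sign (w ⬝ᵥ e)) • e) + v := by
  have hdet : IsUnit (Qᵀ * Q).det := (Matrix.isUnit_iff_isUnit_det _).mp hQ.isUnit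
  have hres : Qᵀ *ᵥ (Q *ᵥ u₀ + r) = 0 := by
    rw [mulVec_add, mulVec_mulVec, hu₀, mulVec_neg, mulVec_mulVec, mul_nonsing_inv _ hdet,
      one_mulVec, neg_add_cancel]
  have hp' : 0 < w ⬝ᵥ u₀ + v := by
    rw [hu₀, dotProduct_neg]; linarith
  have hmain : ∀ e : Fin m → ℝ, e ⬝ᵥ e = 1 → F *ᵥ e = 0 →
      w ⬝ᵥ e ≠ 0 ∧
      ∃ α₀ : ℝ, 0 < α₀ ∧ ∀ α : ℝ, α₀ ≤ α →
        eucNorm (Q *ᵥ (u₀ + (α * Real.sign (w ⬝ᵥ e)) • e) + r) ≤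
          w ⬝ᵥ (u₀ + (α * Real.sign (w ⬝ᵥ e)) • e) + v := by
    intro e hunit hFe
    have hQe : (Qᵀ * Q) *ᵥ e = (w ⬝ᵥ e) • w := by
      rw [hFdef, sub_mulVec, sub_eq_zero, vecMulVec_mulVec] at hFe
      simpa using hFe
    have hquad : e ⬝ᵥ ((Qᵀ * Q) *ᵥ e) = (w ⬝ᵥ e) ^ 2 := by
      rw [hQe, dotProduct_smul, dotProduct_comm e w, smul_eq_mul, sq]
    have hnorm : (Q *ᵥ e) ⬝ᵥ (Q *ᵥ e) = (w ⬝ᵥ e) ^ 2 := by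
      rw [← hquad, ← mulVec_mulVec, dotProduct_mulVec e, vecMul_transpose]
    have hwe : w ⬝ᵥ e ≠ 0 := by
      have he : e ≠ 0 := by
        rintro rfl
        simp at hunit
      have hpos : 0 < e ⬝ᵥ ((Qᵀ * Q) *ᵥ e) := by
        simpa using hQ.dotProduct_mulVec_pos he
      rw [hquad] at hpos
      exact pow_ne_zero_iff two_ne_zero |>.mp hpos.ne'
    have hc : 0 < 2 * (w ⬝ᵥ u₀ + v) * |w ⬝ᵥ e| := by positivity
    have hy : 0 ≤ (Q *ᵥ u₀ + r) ⬝ᵥ (Q *ᵥ u₀ + r) := by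
      simpa using dotProduct_star_self_nonneg (Q *ᵥ u₀ + r)
    refine ⟨hwe, (Q *ᵥ u₀ + r) ⬝ᵥ (Q *ᵥ u₀ + r) / (2 * (w ⬝ᵥ u₀ + v) * |w ⬝ᵥ e|) + 1,
      by positivity, fun α hα => ?_⟩
    have hα' : (Q *ᵥ u₀ + r) ⬝ᵥ (Q *ᵥ u₀ + r) / (2 * (w ⬝ᵥ u₀ + v) * |w ⬝ᵥ e|) ≤ α := by
      linarith
    refine eucNorm_add_smul_sign_le Q r w u₀ e v α hres hnorm hwe hp'.le
      (le_trans (by positivity) hα') ?_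
    rw [div_le_iff₀ hc] at hα'
    linarith
  obtain ⟨e, hunit, hFe⟩ := hsing
  obtain ⟨-, α₀, -, h⟩ := hmain e hunit hFe
  exact ⟨⟨_, h α₀ le_rfl⟩, hmain⟩
end

section
/- Suppose the square matrix [r Q] ∈ ℝ^{(m+1)×(m+1)} is invertible, F = QᵀQ − wᵀw is positive semidefinite, and p := v − w (QᵀQ)⁻¹ Qᵀ r ≤ 0. Then the second-order cone constraint is infeasible: for every u ∈ ℝ^m, ‖Q u + r‖₂ > w u + v. (Necessity direction of Case 3 of Theorem 2 of the paper: the hyperplane lies below the positive sheet of the hyperboloid.) -/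
open Matrix

/-- Multiplying the bordered matrix `[r Q]` by a vector splits off the column `r`. -/
theorem of_cons_mulVec_cons {m n : ℕ} (Q : Matrix (Fin n) (Fin m) ℝ) (r : Fin n → ℝ)
    (a : ℝ) (y : Fin m → ℝ) :
    (Matrix.of (fun i => Fin.cons (r i) (Q i)) : Matrix (Fin n) (Fin (m + 1)) ℝ) *ᵥ
      (Fin.cons a y : Fin (m + 1) → ℝ) = a • r + Q *ᵥ y := by
  ext i
  simp [Matrix.mulVec, dotProduct, Fin.sum_univ_succ, mul_comm]

/-- The Gram matrix of a matrix with trivial kernel is invertible. -/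
theorem isUnit_transpose_mul_self {m n : ℕ} {Q : Matrix (Fin n) (Fin m) ℝ}
    (hQ : ∀ y, Q *ᵥ y = 0 → y = 0) : IsUnit (Qᵀ * Q) := by
  rw [← Matrix.mulVec_injective_iff_isUnit]
  refine (injective_iff_map_eq_zero (Qᵀ * Q).mulVecLin).2 fun y hy => hQ y ?_
  rw [← dotProduct_self_eq_zero, Matrix.dotProduct_mulVec, Matrix.vecMul_mulVec,
    ← Matrix.dotProduct_mulVec]
  have hy' : (Qᵀ * Q) *ᵥ y = 0 := hy
  simp [hy']

/-- Necessity direction of Case 3 of Theorem 2: if `[r Q]` is invertible,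
`F = QᵀQ − wᵀw` is positive semidefinite, and `p = v − w (QᵀQ)⁻¹ Qᵀ r ≤ 0`,
then the SOC constraint is infeasible: `‖Q u + r‖₂ > w u + v` for all `u`. -/
theorem case3_necessity {m : ℕ} (hm : 0 < m)
    (Q : Matrix (Fin (m + 1)) (Fin m) ℝ) (r : Fin (m + 1) → ℝ)
    (w : Fin m → ℝ) (v : ℝ)
    (hrQ : IsUnit
      (Matrix.of (fun i => Fin.cons (r i) (Q i)) :
        Matrix (Fin (m + 1)) (Fin (m + 1)) ℝ))
    (hFpsd : (Qᵀ * Q - Matrix.vecMulVec w w).PosSemidef)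
    (hp : v - w ⬝ᵥ ((Qᵀ * Q)⁻¹ *ᵥ (Qᵀ *ᵥ r)) ≤ 0) :
    ∀ u : Fin m → ℝ, w ⬝ᵥ u + v < eucNorm (Q *ᵥ u + r) := by
  intro u
  have hinj := Matrix.mulVec_injective_of_isUnit hrQ
  have hker : ∀ (a : ℝ) (y : Fin m → ℝ), a • r + Q *ᵥ y = 0 →
      (Fin.cons a y : Fin (m + 1) → ℝ) = 0 := fun a y h =>
    hinj (by rw [of_cons_mulVec_cons, h, Matrix.mulVec_zero])
  have hQ : ∀ y, Q *ᵥ y = 0 → y = 0 := fun y hy => by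
    have h := hker 0 y (by simp [hy])
    ext i
    simpa using congrFun h i.succ
  have hdet := (Matrix.isUnit_iff_isUnit_det _).1 (isUnit_transpose_mul_self hQ)
  set s := (Qᵀ * Q)⁻¹ *ᵥ (Qᵀ *ᵥ r) with hs
  have hnormal : Qᵀ *ᵥ (r - Q *ᵥ s) = 0 := by
    rw [Matrix.mulVec_sub, Matrix.mulVec_mulVec, hs, Matrix.mulVec_mulVec,
      Matrix.mul_nonsing_inv _ hdet, Matrix.one_mulVec, sub_self]
  have hres : r - Q *ᵥ s ≠ 0 := fun h => by
    have h0 := hker 1 (-s) (by rw [Matrix.mulVec_neg, one_smul, ← sub_eq_add_neg, h])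
    simpa using congrFun h0 0
  set e := r - Q *ᵥ s with he
  have hsplit : Q *ᵥ u + r = Q *ᵥ (u + s) + e := by
    rw [he, Matrix.mulVec_add]
    abel
  have horth : Q *ᵥ (u + s) ⬝ᵥ e = 0 := by
    rw [dotProduct_comm, Matrix.dotProduct_mulVec, ← Matrix.mulVec_transpose, hnormal,
      zero_dotProduct]
  have hpos : 0 < e ⬝ᵥ e :=
    lt_of_le_of_ne (by simpa using dotProduct_star_self_nonneg e)
      (Ne.symm (mt dotProduct_self_eq_zero.1 hres))
  have hF : (w ⬝ᵥ (u + s)) ^ 2 ≤ Q *ᵥ (u + s) ⬝ᵥ Q *ᵥ (u + s) := by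
    have h := hFpsd.dotProduct_mulVec_nonneg (u + s)
    rw [star_trivial, Matrix.sub_mulVec, dotProduct_sub, Matrix.vecMulVec_mulVec,
      ← Matrix.mulVec_mulVec, Matrix.dotProduct_mulVec, Matrix.vecMul_transpose] at h
    simp only [op_smul_eq_smul, dotProduct_smul, smul_eq_mul] at h
    rw [dotProduct_comm (u + s) w] at h
    linarith [sq (w ⬝ᵥ (u + s))]
  have hle : w ⬝ᵥ u + v ≤ w ⬝ᵥ (u + s) := by
    rw [dotProduct_add]
    linarith
  refine hle.trans_lt (Real.lt_sqrt_of_sq_lt (hF.trans_lt ?_))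
  rw [hsplit, add_dotProduct, dotProduct_add, dotProduct_add, horth,
    dotProduct_comm e (Q *ᵥ (u + s)), horth]
  linarith
end

section
/- Let K₁, …, K_p ∈ ℝ^{N×N} be symmetric positive semidefinite matrices and Y ∈ ℝ^{p×N}. Then the matrix M ∈ ℝ^{N×N} with entries M_{jl} = Σ_{i=1}^{p} (K_i)_{jl} Y_{ij} Y_{il} is symmetric positive semidefinite. (This shows that the Gram matrix of the Affine Dot Product compound kernel k_c((x,y),(x',y')) = yᵀ Diag(k₁(x,x'),…,k_p(x,x')) y' is positive semidefinite whenever each k_i is a positive definite kernel, i.e., that k_c is a valid kernel.) -/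
open Matrix

/-- The Gram matrix of the Affine Dot Product compound kernel is positive
semidefinite: if `K₁, …, K_p` are symmetric positive semidefinite `N × N`
matrices and `Y ∈ ℝ^{p×N}`, then the matrix `M` with entries
`M_{jl} = Σ_i (K_i)_{jl} Y_{ij} Y_{il}` is (symmetric) positive
semidefinite. -/
theorem adp_compound_kernel_psd {N p : ℕ} (hN : 0 < N) (hp : 0 < p)
    (K : Fin p → Matrix (Fin N) (Fin N) ℝ)
    (hK : ∀ i, (K i).PosSemidef)
    (Y : Matrix (Fin p) (Fin N) ℝ) :
    (Matrix.of fun j l => ∑ i : Fin p, K i j l * Y i j * Y i l :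
      Matrix (Fin N) (Fin N) ℝ).PosSemidef := by
  have hsum : (∑ i, diagonal (Y i) * K i * (diagonal (Y i))ᴴ).PosSemidef :=
    posSemidef_sum _ fun i _ => (hK i).mul_mul_conjTranspose_same _
  convert hsum using 1
  ext j l
  simp only [of_apply, Matrix.sum_apply, diagonal_conjTranspose, mul_diagonal, diagonal_mul,
    star_trivial, mul_comm (K _ j l)]
end
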